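/- arXiv:1601.05525 — 4 statements merged into one kernel-verified Lean document; each statement's English description precedes it below -/
import Mathlib

section
/- Let A and B be n×n complex positive semidefinite matrices. Then for every j = 1, …, n, the j-th largest eigenvalue of A + B satisfies λ_j(A + B) ≥ 2·√(σ_j(AB)), where σ_j(AB) denotes the j-th largest singular value of AB. -/
/-!
Write `A = R²`, `B = S²`, `L = (S A S)^{1/2}`, so that `‖R S x‖ = ‖L x‖`, and consider the
linear map `W = A B + S L S`. Suppose `‖A B x‖ ≥ t² ‖x‖`, and put `y = S x`, `w = W x`.

Expanding `‖w‖²`, with `⟪A B x, S L y⟫ = ⟪L² y, L y⟫` and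
`t⁴ ‖x‖² + ‖S L y‖² ≥ 2 t² ⟪x, S L y⟫ = 2 t² ⟪L y, y⟫`, gives
`‖w‖² ≥ 2 ⟪L³ y, y⟫ + 2 t² ⟪L y, y⟫ ≥ 4 t ‖L y‖²`, the last step being `L (L - t)² ≥ 0`. On the
other hand `w = R (R S y) + S (L y)` with `‖R S y‖ = ‖L y‖`, so by Cauchy–Schwarz
`‖w‖⁴ ≤ 2 ‖L y‖² (‖R w‖² + ‖S w‖²) = 2 ‖L y‖² ⟪(A + B) w, w⟫`. Together these give
`⟪(A + B) w, w⟫ ≥ 2 t ‖w‖²`. If `t > 0` then `W` is injective on such `x`: `w = 0` gives `L y = 0`,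
hence `A B x = 0` and `x = 0`.

With `t² = σ_j(AB)` there is a `j`-dimensional space of such `x`; its image under `W` is a
`j`-dimensional space on which the quadratic form of `A + B` is at least `2 t`, and Courant–Fischer
concludes.
-/

open Matrix
open scoped Classical ComplexOrder

/-- `eigDesc A j` is the `j`-th largest eigenvalue (1-based) of the Hermitian matrix `A`. -/
noncomputable def eigDesc {m : Type*} [Fintype m] [DecidableEq m] (A : Matrix m m ℂ) (j : ℕ) : ℝ :=
  if h : A.IsHermitian then
    ((Finset.univ.val.map h.eigenvalues).sort (· ≤ ·)).getD (Fintype.card m - j) 0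
  else 0

/-- `singDesc M j` is the `j`-th largest singular value (1-based) of `M`, i.e. the square root
of the `j`-th largest eigenvalue of `Mᴴ * M`. -/
noncomputable def singDesc {m : Type*} [Fintype m] [DecidableEq m] (M : Matrix m m ℂ) (j : ℕ) : ℝ :=
  Real.sqrt (eigDesc (Mᴴ * M) j)

/-- `matPow A s` is the power `A ^ s` of a positive semidefinite matrix `A`, defined via the
spectral decomposition of `A` (junk value `0` if `A` is not positive semidefinite). -/
noncomputable def matPow {m : Type*} [Fintype m] [DecidableEq m] (A : Matrix m m ℂ) (s : ℝ) :
    Matrix m m ℂ :=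
  if h : A.PosSemidef then
    (h.1.eigenvectorUnitary : Matrix m m ℂ) *
      Matrix.diagonal (fun i => ((h.1.eigenvalues i ^ s : ℝ) : ℂ)) *
      (h.1.eigenvectorUnitary : Matrix m m ℂ)ᴴ
  else 0

open Module Submodule
open scoped InnerProductSpace

variable {𝕜 E : Type*} [RCLike 𝕜] [NormedAddCommGroup E] [InnerProductSpace 𝕜 E]

lemma finrank_span_image_finset {R M ι : Type*} [Ring R] [StrongRankCondition R] [AddCommGroup M]
    [Module R M] {v : ι → M} (hv : LinearIndependent R v) (s : Finset ι) :
    finrank R (span R (v '' s)) = s.card := by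
  have := nontrivial_of_invariantBasisNumber R
  rw [Set.image_eq_range]
  exact (finrank_span_eq_card (hv.comp _ Subtype.val_injective)).trans (by simp)

lemma inner_eq_zero_of_mem_span_image {ι : Type*} {v : ι → E} (hv : Orthonormal 𝕜 v) {s : Set ι}
    {x : E} (hx : x ∈ span 𝕜 (v '' s)) {k : ι} (hk : k ∉ s) : ⟪v k, x⟫_𝕜 = 0 := by
  have span_le_ker : span 𝕜 (v '' s) ≤ LinearMap.ker (innerₛₗ 𝕜 (v k)) := by
    rw [span_le]
    rintro _ ⟨l, hl, rfl⟩
    exact hv.2 fun h ↦ hk (h ▸ hl)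
  exact span_le_ker hx

section CourantFischer

variable [FiniteDimensional 𝕜 E] {n : ℕ} {T : E →ₗ[𝕜] E}

lemma re_inner_apply_self_eq_sum (hT : T.IsSymmetric) (hn : finrank 𝕜 E = n) (x : E) :
    RCLike.re ⟪T x, x⟫_𝕜 =
      ∑ k, hT.eigenvalues hn k * ‖⟪hT.eigenvectorBasis hn k, x⟫_𝕜‖ ^ 2 := by
  rw [← (hT.eigenvectorBasis hn).sum_inner_mul_inner, map_sum]
  refine Finset.sum_congr rfl fun k _ ↦ ?_
  rw [hT, hT.apply_eigenvectorBasis, inner_smul_right, mul_assoc, RCLike.re_ofReal_mul,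
    inner_mul_symm_re_eq_norm, norm_mul, norm_inner_symm, sq]

lemma exists_submodule_eigenvalues_le_re_inner (hT : T.IsSymmetric) (hn : finrank 𝕜 E = n)
    (i : Fin n) : ∃ U : Submodule 𝕜 E, finrank 𝕜 U = i + 1 ∧
      ∀ x ∈ U, hT.eigenvalues hn i * ‖x‖ ^ 2 ≤ RCLike.re ⟪T x, x⟫_𝕜 := by
  let b := hT.eigenvectorBasis hn
  refine ⟨span 𝕜 (b '' (Finset.Iic i)), ?_, fun x hx ↦ ?_⟩
  · simp [finrank_span_image_finset b.orthonormal.linearIndependent]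
  rw [re_inner_apply_self_eq_sum hT hn, ← b.sum_sq_norm_inner_right, Finset.mul_sum]
  refine Finset.sum_le_sum fun k _ ↦ ?_
  by_cases hk : k ≤ i
  · gcongr
    exact hT.eigenvalues_antitone hn hk
  · simp [b, inner_eq_zero_of_mem_span_image b.orthonormal hx (k := k) (by simpa using hk)]

lemma exists_submodule_re_inner_le_eigenvalues (hT : T.IsSymmetric) (hn : finrank 𝕜 E = n)
    (i : Fin n) : ∃ U : Submodule 𝕜 E, finrank 𝕜 U = n - i ∧
      ∀ x ∈ U, RCLike.re ⟪T x, x⟫_𝕜 ≤ hT.eigenvalues hn i * ‖x‖ ^ 2 := by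
  let b := hT.eigenvectorBasis hn
  refine ⟨span 𝕜 (b '' (Finset.Ici i)), ?_, fun x hx ↦ ?_⟩
  · simp [finrank_span_image_finset b.orthonormal.linearIndependent]
  rw [re_inner_apply_self_eq_sum hT hn, ← b.sum_sq_norm_inner_right, Finset.mul_sum]
  refine Finset.sum_le_sum fun k _ ↦ ?_
  by_cases hk : i ≤ k
  · gcongr
    exact hT.eigenvalues_antitone hn hk
  · simp [b, inner_eq_zero_of_mem_span_image b.orthonormal hx (k := k) (by simpa using hk)]

lemma le_eigenvalues_of_submodule (hT : T.IsSymmetric) (hn : finrank 𝕜 E = n) {i : Fin n}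
    {c : ℝ} {U : Submodule 𝕜 E} (hU : i < finrank 𝕜 U)
    (hc : ∀ x ∈ U, c * ‖x‖ ^ 2 ≤ RCLike.re ⟪T x, x⟫_𝕜) : c ≤ hT.eigenvalues hn i := by
  obtain ⟨V, hV, hTV⟩ := exists_submodule_re_inner_le_eigenvalues hT hn i
  have not_disjoint : ¬ Disjoint U V := fun h ↦ by
    have := finrank_add_finrank_le_of_disjoint h
    omega
  obtain ⟨x, ⟨hxU, hxV⟩, hx⟩ := (Submodule.ne_bot_iff _).1 (disjoint_iff.not.1 not_disjoint)
  exact le_of_mul_le_mul_right ((hc x hxU).trans (hTV x hxV)) (by positivity)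

end CourantFischer

lemma exists_isPositive_mul_self_eq [FiniteDimensional 𝕜 E] {T : E →ₗ[𝕜] E} (hT : T.IsPositive) :
    ∃ S : E →ₗ[𝕜] E, S.IsPositive ∧ S * S = T := by
  let b := hT.isSymmetric.eigenvectorBasis rfl
  let D : Matrix _ _ 𝕜 := diagonal fun k ↦ (√(hT.isSymmetric.eigenvalues rfl k) : 𝕜)
  refine ⟨toLin b.toBasis b.toBasis D, ?_, ?_⟩
  · rw [← LinearMap.posSemidef_toMatrix_iff b, LinearMap.toMatrix_toLin]
    exact PosSemidef.diagonal fun k ↦ by simp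
  · apply (LinearMap.toMatrix b.toBasis b.toBasis).injective
    rw [LinearMap.toMatrix_mul, LinearMap.toMatrix_toLin, hT.isSymmetric.toMatrix_eigenvectorBasis,
      diagonal_mul_diagonal]
    congr! 2 with k
    rw [← RCLike.ofReal_mul, Real.mul_self_sqrt (hT.nonneg_eigenvalues rfl k)]
    rfl

section QuadraticForms

variable {R S L : E →ₗ[𝕜] E}

lemma two_mul_norm_apply_sq_le (hL : L.IsPositive) (t : ℝ) (x : E) :
    2 * t * ‖L x‖ ^ 2 ≤ RCLike.re ⟪L (L x), L x⟫_𝕜 + t ^ 2 * RCLike.re ⟪L x, x⟫_𝕜 := by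
  have nonneg := hL.re_inner_nonneg_left (L x - (t : 𝕜) • x)
  have symm : ⟪L (L x), x⟫_𝕜 = ⟪L x, L x⟫_𝕜 := hL.isSymmetric _ _
  have expand : RCLike.re ⟪L (L x - (t : 𝕜) • x), L x - (t : 𝕜) • x⟫_𝕜 =
      RCLike.re ⟪L (L x), L x⟫_𝕜 + t ^ 2 * RCLike.re ⟪L x, x⟫_𝕜 - 2 * t * ‖L x‖ ^ 2 := by
    simp only [map_sub, map_smul, inner_sub_left, inner_sub_right, inner_smul_left,
      inner_smul_right, symm, RCLike.conj_ofReal, RCLike.re_ofReal_mul, inner_self_eq_norm_sq]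
    ring
  linarith

lemma norm_map_add_map_pow_four_le (hR : R.IsSymmetric) (hS : S.IsSymmetric) (a b : E) :
    ‖R a + S b‖ ^ 4 ≤
      (‖a‖ ^ 2 + ‖b‖ ^ 2) * (‖R (R a + S b)‖ ^ 2 + ‖S (R a + S b)‖ ^ 2) := by
  set w := R a + S b with hw
  have norm_sq_le : ‖w‖ ^ 2 ≤ ‖a‖ * ‖R w‖ + ‖b‖ * ‖S w‖ :=
    calc ‖w‖ ^ 2 = RCLike.re ⟪R a + S b, w⟫_𝕜 := by rw [← hw, inner_self_eq_norm_sq]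
      _ = RCLike.re ⟪a, R w⟫_𝕜 + RCLike.re ⟪b, S w⟫_𝕜 := by rw [inner_add_left, map_add, hR, hS]
      _ ≤ ‖a‖ * ‖R w‖ + ‖b‖ * ‖S w‖ := by gcongr <;> exact re_inner_le_norm _ _
  calc ‖w‖ ^ 4 = (‖w‖ ^ 2) ^ 2 := by ring
    _ ≤ (‖a‖ * ‖R w‖ + ‖b‖ * ‖S w‖) ^ 2 := by gcongr
    _ ≤ (‖a‖ ^ 2 + ‖b‖ ^ 2) * (‖R w‖ ^ 2 + ‖S w‖ ^ 2) := by
      linarith [sq_nonneg (‖a‖ * ‖S w‖ - ‖b‖ * ‖R w‖)]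

end QuadraticForms

section TransferMap

/-- For `A = R²` and `B = S²`, the map `AB + SLS`. When `L² = S A S` it carries a vector that `AB`
stretches by at least `t²` to one on which the quadratic form of `A + B` is at least `2t`. -/
def transferMap (R S L : E →ₗ[𝕜] E) : E →ₗ[𝕜] E := R * R * (S * S) + S * L * S

variable {R S L : E →ₗ[𝕜] E} (hS : S.IsSymmetric) (hL : L.IsPositive)
  (hLRS : L * L = S * (R * R) * S)

lemma transferMap_apply (x : E) : transferMap R S L x = R (R (S (S x))) + S (L (S x)) := rfl

include hS hL hLRS

lemma four_mul_norm_sq_le_norm_transferMap_sq {x : E} {t : ℝ}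
    (hx : t ^ 2 * ‖x‖ ≤ ‖(R * R * (S * S)) x‖) :
    4 * t * ‖L (S x)‖ ^ 2 ≤ ‖transferMap R S L x‖ ^ 2 := by
  set y := S x
  have cross : ⟪R (R (S y)), S (L y)⟫_𝕜 = ⟪L (L y), L y⟫_𝕜 := by
    have L_sq : L (L y) = S (R (R (S y))) := LinearMap.congr_fun hLRS y
    rw [L_sq, hS]
  have amgm : 2 * t ^ 2 * RCLike.re ⟪L y, y⟫_𝕜 ≤ ‖R (R (S y))‖ ^ 2 + ‖S (L y)‖ ^ 2 :=
    calc 2 * t ^ 2 * RCLike.re ⟪L y, y⟫_𝕜 = 2 * t ^ 2 * RCLike.re ⟪S (L y), x⟫_𝕜 := by rw [hS]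
      _ ≤ 2 * t ^ 2 * (‖S (L y)‖ * ‖x‖) := by gcongr; exact re_inner_le_norm _ _
      _ = 2 * (t ^ 2 * ‖x‖) * ‖S (L y)‖ := by ring
      _ ≤ 2 * ‖R (R (S y))‖ * ‖S (L y)‖ := by gcongr; exact hx
      _ ≤ ‖R (R (S y))‖ ^ 2 + ‖S (L y)‖ ^ 2 := two_mul_le_add_sq _ _
  calc 4 * t * ‖L y‖ ^ 2
      ≤ 2 * RCLike.re ⟪L (L y), L y⟫_𝕜 + 2 * t ^ 2 * RCLike.re ⟪L y, y⟫_𝕜 := by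
        linarith [two_mul_norm_apply_sq_le hL t y]
    _ ≤ ‖R (R (S y))‖ ^ 2 + 2 * RCLike.re ⟪L (L y), L y⟫_𝕜 + ‖S (L y)‖ ^ 2 := by linarith
    _ = ‖transferMap R S L x‖ ^ 2 := by rw [transferMap_apply, @norm_add_sq 𝕜, cross]

lemma eq_zero_of_transferMap_eq_zero {x : E} {t : ℝ} (ht : 0 < t)
    (hx : t ^ 2 * ‖x‖ ≤ ‖(R * R * (S * S)) x‖) (hw : transferMap R S L x = 0) : x = 0 := by
  have lower := four_mul_norm_sq_le_norm_transferMap_sq hS hL hLRS hx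
  have hLS : L (S x) = 0 := by
    rw [hw, norm_zero, zero_pow two_ne_zero] at lower
    simpa using nonpos_of_mul_nonpos_right lower (by positivity)
  have hRS : (R * R * (S * S)) x = 0 := by
    simpa [transferMap_apply, hLS] using hw
  rw [hRS, norm_zero] at hx
  simpa using nonpos_of_mul_nonpos_right hx (by positivity)

variable (hR : R.IsSymmetric)
include hR

lemma norm_apply_eq_of_mul_self_eq (x : E) : ‖R (S x)‖ = ‖L x‖ := by
  have : ⟪R (S x), R (S x)⟫_𝕜 = ⟪L x, L x⟫_𝕜 :=
    calc ⟪R (S x), R (S x)⟫_𝕜 = ⟪(S * (R * R) * S) x, x⟫_𝕜 := by simp [hR _ _, hS _ _]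
      _ = ⟪L x, L x⟫_𝕜 := by simp [← hLRS, hL.isSymmetric _ _]
  rw [@norm_eq_sqrt_re_inner 𝕜, this, ← @norm_eq_sqrt_re_inner 𝕜]

lemma two_mul_norm_transferMap_sq_le {x : E} {t : ℝ} (ht : 0 ≤ t)
    (hx : t ^ 2 * ‖x‖ ≤ ‖(R * R * (S * S)) x‖) :
    2 * t * ‖transferMap R S L x‖ ^ 2 ≤
      ‖R (transferMap R S L x)‖ ^ 2 + ‖S (transferMap R S L x)‖ ^ 2 := by
  have lower := four_mul_norm_sq_le_norm_transferMap_sq hS hL hLRS hx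
  have upper := norm_map_add_map_pow_four_le hR hS (R (S (S x))) (L (S x))
  rw [norm_apply_eq_of_mul_self_eq hS hL hLRS hR, ← transferMap_apply] at upper
  set w := transferMap R S L x
  rcases eq_or_ne w 0 with hw | hw
  · simp [hw]
  · refine le_of_mul_le_mul_right ?_ (by positivity : 0 < ‖w‖ ^ 2)
    calc 2 * t * ‖w‖ ^ 2 * ‖w‖ ^ 2 = 2 * t * ‖w‖ ^ 4 := by ring
      _ ≤ 2 * t * ((‖L (S x)‖ ^ 2 + ‖L (S x)‖ ^ 2) * (‖R w‖ ^ 2 + ‖S w‖ ^ 2)) := by gcongr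
      _ = (‖R w‖ ^ 2 + ‖S w‖ ^ 2) * (4 * t * ‖L (S x)‖ ^ 2) := by ring
      _ ≤ (‖R w‖ ^ 2 + ‖S w‖ ^ 2) * ‖w‖ ^ 2 := by gcongr

end TransferMap

variable [FiniteDimensional 𝕜 E] {A B : E →ₗ[𝕜] E}

lemma exists_submodule_two_mul_le_re_inner_add (hA : A.IsPositive) (hB : B.IsPositive) {t : ℝ}
    (ht : 0 < t) {U : Submodule 𝕜 E} (hU : ∀ x ∈ U, t ^ 2 * ‖x‖ ≤ ‖(A * B) x‖) :
    ∃ V : Submodule 𝕜 E, finrank 𝕜 V = finrank 𝕜 U ∧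
      ∀ w ∈ V, 2 * t * ‖w‖ ^ 2 ≤ RCLike.re ⟪(A + B) w, w⟫_𝕜 := by
  obtain ⟨R, hR, rfl⟩ := exists_isPositive_mul_self_eq hA
  obtain ⟨S, hS, rfl⟩ := exists_isPositive_mul_self_eq hB
  have hSRS : (S * (R * R) * S).IsPositive := by
    simpa [hS.adjoint_eq, mul_assoc] using! hA.adjoint_conj S
  obtain ⟨L, hL, hLRS⟩ := exists_isPositive_mul_self_eq hSRS
  have injective : Function.Injective ((transferMap R S L).domRestrict U) :=
    (injective_iff_map_eq_zero _).2 fun x hx ↦ Subtype.ext <|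
      eq_zero_of_transferMap_eq_zero hS.isSymmetric hL hLRS ht (hU x x.2) hx
  refine ⟨LinearMap.range _, LinearMap.finrank_range_of_inj injective, ?_⟩
  rintro _ ⟨x, rfl⟩
  have := two_mul_norm_transferMap_sq_le hS.isSymmetric hL hLRS hR.isSymmetric ht.le (hU x x.2)
  simpa [inner_add_left, hR.isSymmetric _ _, hS.isSymmetric _ _] using this

theorem stmt0_general {n : ℕ} (hn : finrank 𝕜 E = n) (hA : A.IsPositive) (hB : B.IsPositive)
    (i : Fin n) :
    2 * √((A * B).singularValues i) ≤ (hA.add hB).isSymmetric.eigenvalues hn i := by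
  rcases ((A * B).singularValues_nonneg i).eq_or_lt with hσ | hσ
  · simpa [← hσ] using (hA.add hB).nonneg_eigenvalues hn i
  obtain ⟨U, hUi, hU⟩ :=
    exists_submodule_eigenvalues_le_re_inner (A * B).isSymmetric_adjoint_comp_self hn i
  have stretched : ∀ x ∈ U, √((A * B).singularValues i) ^ 2 * ‖x‖ ≤ ‖(A * B) x‖ := fun x hx ↦ by
    have := hU x hx
    rw [← LinearMap.sq_singularValues_fin, ← mul_pow, LinearMap.comp_apply,
      LinearMap.adjoint_inner_left, inner_self_eq_norm_sq] at this
    rw [Real.sq_sqrt hσ.le]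
    exact le_of_sq_le_sq this (norm_nonneg _)
  obtain ⟨V, hVU, hV⟩ :=
    exists_submodule_two_mul_le_re_inner_add hA hB (Real.sqrt_pos.2 hσ) stretched
  exact le_eigenvalues_of_submodule (hA.add hB).isSymmetric hn (by omega) hV

section Matrices

variable {m : Type*} [Fintype m] [DecidableEq m]

lemma sort_map_eigenvalues {M : Matrix m m 𝕜} (hM : M.IsHermitian) :
    (Finset.univ.val.map hM.eigenvalues).sort (· ≤ ·) = (List.ofFn hM.eigenvalues₀).reverse := by
  have perm : ((Finset.univ.val.map hM.eigenvalues).sort (· ≤ ·)).Perm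
      (List.ofFn hM.eigenvalues₀) := by
    rw [← Multiset.coe_eq_coe, Multiset.sort_eq, ← Fin.univ_val_map,
      show hM.eigenvalues = hM.eigenvalues₀ ∘ _ from rfl, ← Multiset.map_map,
      Multiset.map_univ_val_equiv]
  exact (perm.trans (List.reverse_perm _).symm).eq_of_sortedLE
    (Multiset.pairwise_sort _ _).sortedLE hM.eigenvalues₀_antitone.sortedGE_ofFn.reverse

variable {n : ℕ} {M : Matrix m m ℂ} {T : EuclideanSpace ℂ m →ₗ[ℂ] EuclideanSpace ℂ m}

lemma eigDesc_add_one (hT : T.IsSymmetric) (hM : M.toEuclideanLin = T)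
    (hn : finrank ℂ (EuclideanSpace ℂ m) = n) (i : Fin n) :
    eigDesc M (i + 1) = hT.eigenvalues hn i := by
  subst hM
  obtain rfl : n = Fintype.card m := hn.symm.trans finrank_euclideanSpace
  have hM := isSymmetric_toEuclideanLin_iff.1 hT
  have hi : Fintype.card m - (i + 1) < (List.ofFn hM.eigenvalues₀).reverse.length := by
    simp only [List.length_reverse, List.length_ofFn]
    omega
  rw [eigDesc, dif_pos hM, sort_map_eigenvalues, List.getD_eq_getElem _ _ hi,
    List.getElem_reverse, List.getElem_ofFn]
  change hM.eigenvalues₀ _ = hM.eigenvalues₀ i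
  congr 1
  ext
  simp only [List.length_ofFn]
  omega

lemma singDesc_add_one (hM : M.toEuclideanLin = T)
    (hn : finrank ℂ (EuclideanSpace ℂ m) = n) (i : Fin n) :
    singDesc M (i + 1) = T.singularValues i := by
  rw [singDesc, LinearMap.singularValues_fin T hn, eigDesc_add_one]
  rw [toLpLin_mul_same, toEuclideanLin_conjTranspose_eq_adjoint, hM]

end Matrices

/-- For `n × n` positive semidefinite matrices `A, B`, the `j`-th largest eigenvalue of `A + B`
satisfies `λ_j(A + B) ≥ 2 √(σ_j(AB))`. -/
theorem stmt0 {n : ℕ} (A B : Matrix (Fin n) (Fin n) ℂ)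
    (hA : A.PosSemidef) (hB : B.PosSemidef) :
    ∀ j : ℕ, 1 ≤ j → j ≤ n →
      2 * Real.sqrt (singDesc (A * B) j) ≤ eigDesc (A + B) j := by
  rintro (_ | k) h1 hj
  · omega
  have hn := finrank_euclideanSpace_fin (𝕜 := ℂ) (n := n)
  rw [singDesc_add_one (toLpLin_mul_same _ _ _) hn ⟨k, hj⟩,
    eigDesc_add_one _ (map_add _ A B) hn ⟨k, hj⟩]
  exact stmt0_general hn (isPositive_toEuclideanLin_iff.2 hA) (isPositive_toEuclideanLin_iff.2 hB) _
end

section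
/- Let A and B be n×n complex positive definite matrices and let G be the positive definite matrix satisfying G A⁻¹ G = B (i.e., G = A♯B). Then for every j = 1, …, n, λ_j(A + B) ≥ 2 λ_j(G). -/
/-!
Completing the square with respect to `A⁻¹` gives `A + G A⁻¹ G - 2 G = (A - G) A⁻¹ (A - G)ᴴ ≥ 0`, so
`2 G ≤ A + B` in the Loewner order, and the eigenvalues follow by Weyl's monotonicity principle: the
span of the eigenvectors of `G` for its `j` largest eigenvalues meets the span of the eigenvectors
of `A + B` for its `n - j + 1` smallest ones, and the two quadratic forms are compared at a nonzero
vector of the intersection.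
-/

open Matrix
open scoped Classical ComplexOrder

open scoped InnerProductSpace

lemma exists_ne_zero_repr_eq_zero_of_gt_of_lt {K V ι : Type*} [DivisionRing K] [AddCommGroup V]
    [Module K V] [Finite ι] [LinearOrder ι] (b c : Module.Basis ι K V) (j : ι) :
    ∃ x ≠ 0, (∀ i > j, b.repr x i = 0) ∧ ∀ i < j, c.repr x i = 0 := by
  have := Fintype.ofFinite ι
  have := b.finiteDimensional_of_finite
  -- `f` imposes one linear condition for each index other than `j`, hence fewer than `dim V`.
  let f : V →ₗ[K] {k // k ≠ j} → K :=
    LinearMap.pi fun k => if j < k then b.coord k else c.coord k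
  have hcard : Module.finrank K ({k // k ≠ j} → K) < Module.finrank K V := by
    rw [Module.finrank_fintype_fun_eq_card, Module.finrank_eq_card_basis b]
    exact Fintype.card_subtype_lt (x := j) (by simp)
  obtain ⟨x, hx, hx0⟩ :=
    Submodule.exists_mem_ne_zero_of_ne_bot (LinearMap.ker_ne_bot_of_finrank_lt (f := f) hcard)
  have hfx (k : {k // k ≠ j}) : f x k = 0 := congrFun (LinearMap.mem_ker.mp hx) k
  refine ⟨x, hx0, fun i hi => ?_, fun i hi => ?_⟩
  · simpa [f, hi.lt] using hfx ⟨i, hi.ne'⟩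
  · simpa [f, hi.not_gt] using hfx ⟨i, hi.ne⟩

section SymmetricOperator

variable {𝕜 E : Type*} [RCLike 𝕜] [NormedAddCommGroup E] [InnerProductSpace 𝕜 E]
  [FiniteDimensional 𝕜 E] {T S : E →ₗ[𝕜] E} {n : ℕ}

lemma re_inner_apply_self_eq_sum_eigenvalues (hT : T.IsSymmetric) (hn : Module.finrank 𝕜 E = n)
    (x : E) : RCLike.re ⟪T x, x⟫_𝕜 =
      ∑ i, hT.eigenvalues hn i * ‖(hT.eigenvectorBasis hn).repr x i‖ ^ 2 := by
  rw [← (hT.eigenvectorBasis hn).repr.inner_map_map, PiLp.inner_apply, map_sum]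
  refine Finset.sum_congr rfl fun i _ => ?_
  rw [hT.eigenvectorBasis_apply_self_apply, ← smul_eq_mul, inner_smul_left, RCLike.conj_ofReal,
    RCLike.re_ofReal_mul, inner_self_eq_norm_sq]

lemma eigenvalues_mul_norm_sq_le_re_inner (hT : T.IsSymmetric) (hn : Module.finrank 𝕜 E = n)
    {j : Fin n} {x : E} (hx : ∀ i > j, (hT.eigenvectorBasis hn).repr x i = 0) :
    hT.eigenvalues hn j * ‖x‖ ^ 2 ≤ RCLike.re ⟪T x, x⟫_𝕜 := by
  rw [re_inner_apply_self_eq_sum_eigenvalues hT hn, ← (hT.eigenvectorBasis hn).repr.norm_map,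
    EuclideanSpace.norm_sq_eq, Finset.mul_sum]
  refine Finset.sum_le_sum fun i _ => ?_
  obtain hi | hi := lt_or_ge j i
  · simp [hx i hi]
  · gcongr
    exact hT.eigenvalues_antitone hn hi

lemma re_inner_le_eigenvalues_mul_norm_sq (hT : T.IsSymmetric) (hn : Module.finrank 𝕜 E = n)
    {j : Fin n} {x : E} (hx : ∀ i < j, (hT.eigenvectorBasis hn).repr x i = 0) :
    RCLike.re ⟪T x, x⟫_𝕜 ≤ hT.eigenvalues hn j * ‖x‖ ^ 2 := by
  rw [re_inner_apply_self_eq_sum_eigenvalues hT hn, ← (hT.eigenvectorBasis hn).repr.norm_map,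
    EuclideanSpace.norm_sq_eq, Finset.mul_sum]
  refine Finset.sum_le_sum fun i _ => ?_
  obtain hi | hi := lt_or_ge i j
  · simp [hx i hi]
  · gcongr
    exact hT.eigenvalues_antitone hn hi

lemma mul_eigenvalues_le_eigenvalues_of_smul_le (hT : T.IsSymmetric) (hS : S.IsSymmetric)
    (hn : Module.finrank 𝕜 E = n) {c : ℝ} (hc : 0 ≤ c) (h : (c : 𝕜) • T ≤ S) (j : Fin n) :
    c * hT.eigenvalues hn j ≤ hS.eigenvalues hn j := by
  obtain ⟨x, hx0, hxT, hxS⟩ := exists_ne_zero_repr_eq_zero_of_gt_of_lt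
    (hT.eigenvectorBasis hn).toBasis (hS.eigenvectorBasis hn).toBasis j
  have hform : c * RCLike.re ⟪T x, x⟫_𝕜 ≤ RCLike.re ⟪S x, x⟫_𝕜 := by
    have := ((LinearMap.le_def _ _).mp h).re_inner_nonneg_left x
    simpa [inner_sub_left, inner_smul_left] using this
  refine le_of_mul_le_mul_right ?_ (show 0 < ‖x‖ ^ 2 by positivity)
  calc c * hT.eigenvalues hn j * ‖x‖ ^ 2
      = c * (hT.eigenvalues hn j * ‖x‖ ^ 2) := mul_assoc _ _ _
    _ ≤ c * RCLike.re ⟪T x, x⟫_𝕜 := by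
      gcongr
      exact eigenvalues_mul_norm_sq_le_re_inner hT hn (by simpa using hxT)
    _ ≤ RCLike.re ⟪S x, x⟫_𝕜 := hform
    _ ≤ hS.eigenvalues hn j * ‖x‖ ^ 2 :=
      re_inner_le_eigenvalues_mul_norm_sq hS hn (by simpa using hxS)

end SymmetricOperator

section HermitianMatrix

variable {𝕜 m : Type*} [RCLike 𝕜] [Fintype m] [DecidableEq m] {H K : Matrix m m 𝕜}

lemma mul_eigenvalues₀_le_eigenvalues₀_of_posSemidef_sub_smul (hH : H.IsHermitian)
    (hK : K.IsHermitian) {c : ℝ} (hc : 0 ≤ c) (h : (K - (c : 𝕜) • H).PosSemidef)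
    (j : Fin (Fintype.card m)) : c * hH.eigenvalues₀ j ≤ hK.eigenvalues₀ j := by
  refine mul_eigenvalues_le_eigenvalues_of_smul_le _ _ _ hc ?_ j
  rw [LinearMap.le_def, ← map_smul, ← map_sub]
  exact isPositive_toEuclideanLin_iff.mpr h

lemma map_eigenvalues_eq_map_eigenvalues₀ (hH : H.IsHermitian) :
    Finset.univ.val.map hH.eigenvalues = Finset.univ.val.map hH.eigenvalues₀ := by
  let e : m ≃ Fin (Fintype.card m) := (Fintype.equivOfCardEq (Fintype.card_fin _)).symm
  change Finset.univ.val.map (hH.eigenvalues₀ ∘ e) = _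
  rw [← Multiset.map_map, Multiset.map_univ_val_equiv]

lemma sort_map_eigenvalues_eq_reverse_ofFn (hH : H.IsHermitian) :
    (Finset.univ.val.map hH.eigenvalues).sort (· ≤ ·) = (List.ofFn hH.eigenvalues₀).reverse := by
  refine List.Perm.eq_reverse_of_sortedLE_of_sortedGE ?_
    (Multiset.pairwise_sort _ _).sortedLE hH.eigenvalues₀_antitone.sortedGE_ofFn
  rw [← Multiset.coe_eq_coe, Multiset.sort_eq, map_eigenvalues_eq_map_eigenvalues₀,
    Fin.univ_val_map]

lemma eigDesc_val_add_one {H : Matrix m m ℂ} (hH : H.IsHermitian) (j : Fin (Fintype.card m)) :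
    eigDesc H (j + 1) = hH.eigenvalues₀ j := by
  have hlt : Fintype.card m - (j + 1) < (List.ofFn hH.eigenvalues₀).reverse.length := by
    rw [List.length_reverse, List.length_ofFn]
    omega
  rw [eigDesc, dif_pos hH, sort_map_eigenvalues_eq_reverse_ofFn, List.getD_eq_getElem _ _ hlt,
    List.getElem_reverse, List.getElem_ofFn]
  congr 1
  ext
  simp only [List.length_ofFn]
  omega

end HermitianMatrix

lemma posSemidef_add_mul_inv_mul_sub_two_smul {K m : Type*} [Field K] [PartialOrder K] [StarRing K]
    [Fintype m] [DecidableEq m] {A G : Matrix m m K} (hA : A.PosDef) (hG : G.IsHermitian) :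
    (A + G * A⁻¹ * G - (2 : K) • G).PosSemidef := by
  have hdet : IsUnit A.det := A.isUnit_iff_isUnit_det.mp hA.isUnit
  have hsq : A + G * A⁻¹ * G - (2 : K) • G = (A - G) * A⁻¹ * (A - G)ᴴ := by
    rw [(hA.isHermitian.sub hG).eq, sub_mul, mul_nonsing_inv A hdet, sub_mul, one_mul, mul_sub,
      nonsing_inv_mul_cancel_right _ _ hdet, two_smul]
    abel
  rw [hsq]
  exact hA.inv.posSemidef.mul_mul_conjTranspose_same (A - G)

theorem stmt8_general {m : Type*} [Fintype m] [DecidableEq m] {A B G : Matrix m m ℂ}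
    (hA : A.PosDef) (hG : G.IsHermitian) (hgm : G * A⁻¹ * G = B) {j : ℕ} (hj : 1 ≤ j)
    (hjm : j ≤ Fintype.card m) : 2 * eigDesc G j ≤ eigDesc (A + B) j := by
  have hB : B.IsHermitian := by
    simpa only [hG.eq, hgm] using isHermitian_mul_mul_conjTranspose G hA.inv.isHermitian
  have hloewner : (A + B - ((2 : ℝ) : ℂ) • G).PosSemidef := by
    simpa only [hgm, Complex.ofReal_ofNat] using posSemidef_add_mul_inv_mul_sub_two_smul hA hG
  obtain ⟨k, rfl⟩ := Nat.exists_eq_add_of_le' hj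
  have hle := mul_eigenvalues₀_le_eigenvalues₀_of_posSemidef_sub_smul hG (hA.isHermitian.add hB)
    zero_le_two hloewner ⟨k, hjm⟩
  rwa [← eigDesc_val_add_one, ← eigDesc_val_add_one] at hle

/-- For positive definite `A, B` and `G` positive definite with `G A⁻¹ G = B` (so `G = A ♯ B`),
`λ_j(A + B) ≥ 2 λ_j(G)` for all `j`. -/
theorem stmt8 {n : ℕ} (A B G : Matrix (Fin n) (Fin n) ℂ)
    (hA : A.PosDef) (hB : B.PosDef) (hG : G.PosDef) (hgm : G * A⁻¹ * G = B) :
    ∀ j : ℕ, 1 ≤ j → j ≤ n → 2 * eigDesc G j ≤ eigDesc (A + B) j := by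
  intro j hj hjn
  exact stmt8_general hA hG.isHermitian hgm hj (by rwa [Fintype.card_fin])
end

section
/- (Ando's inequality.) Let A and B be n×n complex positive semidefinite matrices and let t ∈ [0,1]. Then for every j = 1, …, n, λ_j((1−t)A + tB) ≥ σ_j(A^{1−t} B^{t}). -/
/-!
Exchanging the factors gives `σ_j(A^(1-t) B^t) = σ_j(B^t A^(1-t))`, so one may assume `t ≤ 1/2`. Let
`l = σ_j(B^t A^(1-t)) > 0`. By Courant–Fischer some isometry `Y` from a space of dimension `j`
satisfies `l² ≤ Yᴴ A^(1-t) B^(2t) A^(1-t) Y`. Take the polar decomposition `A^(1-t) Y = V P` and put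
`C = Vᴴ B V`. Hansen's inequality `Vᴴ B^(2t) V ≤ C^(2t)` turns the bound into `l² C^(-2t) ≤ P²`,
whence `V (l² C^(-2t)) Vᴴ ≤ A^(1-t) Y Yᴴ A^(1-t) ≤ A^(2(1-t))`. As `2(1-t) ≥ 1`, the Löwner–Heinz
inequality allows taking the root of order `2(1-t)`, and compressing by `V` leaves
`(l² C^(-2t))^(1/(2(1-t))) ≤ Vᴴ A V`. The powers of `C` commute, so the scalar weighted AM–GM
inequality yields `l ≤ (1-t) (l² C^(-2t))^(1/(2(1-t))) + t C ≤ Vᴴ ((1-t) A + t B) V`, and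
Courant–Fischer gives `l ≤ λ_j((1-t) A + t B)`. This argument needs `t > 0`; the case `t = 0` reads
`σ_j(A) ≤ λ_j(A)`, which is the case `t = 1/2` with `B = A`.
-/

open Matrix
open scoped Classical ComplexOrder

open scoped MatrixOrder Matrix.Norms.L2Operator

section Isometry

variable {𝕜 m κ : Type*} [RCLike 𝕜]

lemma mul_mul_conjTranspose_mono [Finite m] [Fintype κ] {X Y : Matrix κ κ 𝕜} (h : X ≤ Y)
    (V : Matrix m κ 𝕜) :
    V * X * Vᴴ ≤ V * Y * Vᴴ := by
  rw [Matrix.le_iff] at h ⊢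
  simpa only [Matrix.mul_sub, Matrix.sub_mul] using h.mul_mul_conjTranspose_same V

lemma conjTranspose_mul_mul_mono [Fintype m] [Finite κ] {X Y : Matrix m m 𝕜} (h : X ≤ Y)
    (V : Matrix m κ 𝕜) :
    Vᴴ * X * V ≤ Vᴴ * Y * V := by
  simpa only [conjTranspose_conjTranspose] using mul_mul_conjTranspose_mono h Vᴴ

variable [Fintype m] [Fintype κ] [DecidableEq κ]

lemma isStarProjection_mul_conjTranspose_self {V : Matrix m κ 𝕜} (hV : Vᴴ * V = 1) :
    IsStarProjection (V * Vᴴ) where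
  isIdempotentElem := by
    rw [IsIdempotentElem, Matrix.mul_assoc, ← Matrix.mul_assoc Vᴴ, hV, Matrix.one_mul]
  isSelfAdjoint := isHermitian_mul_conjTranspose_self V

variable [DecidableEq m]

lemma exists_involution_of_isometry {V : Matrix m κ 𝕜} (hV : Vᴴ * V = 1) :
    ∃ S : Matrix m m 𝕜, S.IsHermitian ∧ S * S = 1 ∧ S * V = V ∧
      (1 / 2 : ℝ) • (1 + S) = V * Vᴴ := by
  have hproj := isStarProjection_mul_conjTranspose_self hV
  have hS : (2 * (V * Vᴴ) - 1).IsHermitian := by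
    rw [two_mul]
    exact (hproj.isSelfAdjoint.add hproj.isSelfAdjoint).sub isHermitian_one
  refine ⟨2 * (V * Vᴴ) - 1, hS, ?_, ?_, ?_⟩
  · simpa only [star_eq_conjTranspose, hS.eq] using
      (Unitary.mem_iff.mp hproj.two_mul_sub_one_mem_unitary).1
  · rw [two_mul, Matrix.sub_mul, Matrix.add_mul, Matrix.mul_assoc, hV, Matrix.mul_one,
      Matrix.one_mul, add_sub_cancel_right]
  · rw [two_mul]
    module

lemma diagonal_comp_mul_of_diagonal_mul_eq {d : m → ℝ} {e : κ → ℝ} {N : Matrix m κ 𝕜}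
    (h : diagonal (RCLike.ofReal ∘ d : m → 𝕜) * N = N * diagonal (RCLike.ofReal ∘ e : κ → 𝕜))
    (f : ℝ → ℝ) :
    diagonal (RCLike.ofReal ∘ f ∘ d : m → 𝕜) * N =
      N * diagonal (RCLike.ofReal ∘ f ∘ e : κ → 𝕜) := by
  ext i j
  have hij := congrFun₂ h i j
  simp only [diagonal_mul, mul_diagonal, Function.comp_apply, mul_comm (N i j)] at hij ⊢
  rcases mul_eq_mul_right_iff.mp hij with hde | hN
  · rw [RCLike.ofReal_injective hde]
  · simp only [hN, mul_zero]

lemma unitary_conj_mul_eq_mul_unitary_conj_iff (U : unitary (Matrix m m 𝕜))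
    (W : unitary (Matrix κ κ 𝕜)) (D : Matrix m m 𝕜) (E : Matrix κ κ 𝕜) (V : Matrix m κ 𝕜) :
    (U : Matrix m m 𝕜) * D * star (U : Matrix m m 𝕜) * V =
        V * ((W : Matrix κ κ 𝕜) * E * star (W : Matrix κ κ 𝕜)) ↔
      D * (star (U : Matrix m m 𝕜) * V * (W : Matrix κ κ 𝕜)) =
        star (U : Matrix m m 𝕜) * V * (W : Matrix κ κ 𝕜) * E := by
  obtain ⟨U, hU⟩ := U
  obtain ⟨W, hW⟩ := W
  obtain ⟨hU, hU'⟩ := Unitary.mem_iff.mp hU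
  obtain ⟨hW, hW'⟩ := Unitary.mem_iff.mp hW
  constructor <;> intro h
  · calc D * (star U * V * W) = star U * U * D * (star U * V * W) := by rw [hU, one_mul]
      _ = star U * (U * D * star U * V) * W := by simp only [Matrix.mul_assoc]
      _ = star U * V * W * E * (star W * W) := by rw [h]; simp only [Matrix.mul_assoc]
      _ = star U * V * W * E := by rw [hW, Matrix.mul_one]
  · calc U * D * star U * V = U * D * star U * V * (W * star W) := by rw [hW', Matrix.mul_one]
      _ = U * (D * (star U * V * W)) * star W := by simp only [Matrix.mul_assoc]
      _ = U * star U * V * (W * E * star W) := by rw [h]; simp only [Matrix.mul_assoc]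
      _ = V * (W * E * star W) := by rw [hU', Matrix.one_mul]

lemma cfc_mul_of_mul_eq_mul {K : Matrix m m 𝕜} {X : Matrix κ κ 𝕜} (hK : K.IsHermitian)
    (hX : X.IsHermitian) {V : Matrix m κ 𝕜} (h : K * V = V * X) (f : ℝ → ℝ) :
    cfc f K * V = V * cfc f X := by
  rw [hK.spectral_theorem, hX.spectral_theorem, Unitary.conjStarAlgAut_apply,
    Unitary.conjStarAlgAut_apply, unitary_conj_mul_eq_mul_unitary_conj_iff] at h
  rw [hK.cfc_eq, hX.cfc_eq, IsHermitian.cfc, IsHermitian.cfc, Unitary.conjStarAlgAut_apply,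
    Unitary.conjStarAlgAut_apply, unitary_conj_mul_eq_mul_unitary_conj_iff]
  exact diagonal_comp_mul_of_diagonal_mul_eq h f

end Isometry

section Rpow

variable {m κ : Type*} [Fintype m] [DecidableEq m] [Fintype κ] [DecidableEq κ]

lemma rpow_mul_of_mul_eq_mul {K : Matrix m m ℂ} {X : Matrix κ κ ℂ} (hK : 0 ≤ K) (hX : 0 ≤ X)
    {V : Matrix m κ ℂ} (h : K * V = V * X) (s : ℝ) : K ^ s * V = V * X ^ s := by
  rw [CFC.rpow_eq_cfc_real, CFC.rpow_eq_cfc_real]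
  exact cfc_mul_of_mul_eq_mul hK.posSemidef.isHermitian hX.posSemidef.isHermitian h _

lemma matPow_eq_rpow {A : Matrix m m ℂ} (hA : A.PosSemidef) (s : ℝ) : matPow A s = A ^ s := by
  rw [CFC.rpow_eq_cfc_real (ha := hA.nonneg), hA.1.cfc_eq, IsHermitian.cfc,
    Unitary.conjStarAlgAut_apply, matPow, dif_pos hA]
  rfl

lemma rpow_isHermitian (A : Matrix m m ℂ) (s : ℝ) : (A ^ s).IsHermitian :=
  (CFC.rpow_nonneg (a := A) (y := s)).posSemidef.isHermitian

lemma rpow_mul_rpow_self {A : Matrix m m ℂ} (hA : 0 ≤ A) {s : ℝ} (hs : 0 ≤ s) :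
    A ^ s * A ^ s = A ^ (s * 2) := by
  rw [← CFC.rpow_rpow_of_exponent_nonneg A s 2 hs zero_le_two, ← sq]
  exact_mod_cast (CFC.rpow_natCast (A ^ s) 2).symm

lemma conjTranspose_mul_rpow_mul_le {B : Matrix m m ℂ} (hB : 0 ≤ B) {V : Matrix m κ ℂ}
    (hV : Vᴴ * V = 1) {s : ℝ} (hs : s ∈ Set.Icc 0 1) :
    Vᴴ * B ^ s * V ≤ (Vᴴ * B * V) ^ s := by
  obtain ⟨S, hS, hSS, hSV, hmean⟩ := exists_involution_of_isometry hV
  have hVS : Vᴴ * S = Vᴴ := by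
    simpa only [conjTranspose_mul, hS.eq] using congrArg conjTranspose hSV
  have hSBS : 0 ≤ S * B * S := by
    simpa only [hS.eq] using (hB.posSemidef.conjTranspose_mul_mul_same S).nonneg
  have hSBS_rpow : (S * B * S) ^ s = S * B ^ s * S := by
    rw [← rpow_mul_of_mul_eq_mul hSBS hB (by rw [mul_assoc, hSS, mul_one]), mul_assoc (_ ^ s),
      hSS, mul_one]
  set L : Matrix m m ℂ := (1 / 2 : ℝ) • B + (1 / 2 : ℝ) • (S * B * S)
  have hL : 0 ≤ L := by positivity
  have hconcave : (1 / 2 : ℝ) • B ^ s + (1 / 2 : ℝ) • (S * B ^ s * S) ≤ L ^ s := by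
    rw [← hSBS_rpow]
    exact (CFC.concaveOn_rpow hs).2 hB hSBS (by norm_num) (by norm_num) (by norm_num)
  have hLV : L * V = V * (Vᴴ * B * V) := by
    calc L * V = (1 / 2 : ℝ) • (1 + S) * B * V := by
          simp only [L, Matrix.add_mul, Matrix.smul_mul, smul_add, Matrix.mul_assoc, hSV,
            Matrix.one_mul]
      _ = V * (Vᴴ * B * V) := by rw [hmean]; simp only [Matrix.mul_assoc]
  calc Vᴴ * B ^ s * V = Vᴴ * ((1 / 2 : ℝ) • B ^ s + (1 / 2 : ℝ) • (S * B ^ s * S)) * V := by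
        have hVSBSV : Vᴴ * (S * B ^ s * S) * V = Vᴴ * B ^ s * V := by
          rw [Matrix.mul_assoc S, ← Matrix.mul_assoc Vᴴ, hVS, Matrix.mul_assoc, Matrix.mul_assoc,
            hSV, Matrix.mul_assoc]
        rw [Matrix.mul_add, Matrix.add_mul, Matrix.mul_smul, Matrix.mul_smul, Matrix.smul_mul,
          Matrix.smul_mul, hVSBSV]
        module
    _ ≤ Vᴴ * L ^ s * V := conjTranspose_mul_mul_mono hconcave V
    _ = (Vᴴ * B * V) ^ s := by
        rw [Matrix.mul_assoc, rpow_mul_of_mul_eq_mul hL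
          (hB.posSemidef.conjTranspose_mul_mul_same V).nonneg hLV, ← Matrix.mul_assoc, hV,
          Matrix.one_mul]

end Rpow

section Polar

variable {m κ : Type*} [Fintype m] [Fintype κ] [DecidableEq κ]

lemma posDef_conjTranspose_mul_self_of_isUnit_mul {W : Matrix κ m ℂ} {Z : Matrix m κ ℂ}
    (h : IsUnit (W * Z)) : (Zᴴ * Z).PosDef := by
  refine PosDef.conjTranspose_mul_self Z (Function.Injective.of_comp (f := W.mulVec) ?_)
  simpa only [Function.comp_def, mulVec_mulVec] using mulVec_injective_of_isUnit h

lemma exists_isometry_mul_eq {Z : Matrix m κ ℂ} (hZ : (Zᴴ * Z).PosDef) :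
    ∃ (V : Matrix m κ ℂ) (P : Matrix κ κ ℂ), Vᴴ * V = 1 ∧ P.PosDef ∧ V * P = Z := by
  set P := CFC.sqrt (Zᴴ * Z)
  have hP : P.PosDef := isStrictlyPositive_iff_posDef.mp hZ.isStrictlyPositive.sqrt
  have hPP : P * P = Zᴴ * Z := CFC.sqrt_mul_sqrt_self _ hZ.posSemidef.nonneg
  have hdet : IsUnit P.det := (isUnit_iff_isUnit_det P).mp hP.isUnit
  refine ⟨Z * P⁻¹, P, ?_, hP, nonsing_inv_mul_cancel_right _ _ hdet⟩
  rw [conjTranspose_mul, conjTranspose_nonsing_inv, hP.isHermitian.eq, Matrix.mul_assoc,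
    ← Matrix.mul_assoc Zᴴ, ← hPP, mul_nonsing_inv_cancel_right _ _ hdet,
    nonsing_inv_mul _ hdet]

end Polar

section CStarAlgebra

variable {A : Type*} [CStarAlgebra A] [PartialOrder A] [StarOrderedRing A]

lemma smul_inverse_le_mul_self_of_smul_one_le {p d : A} (hp : IsUnit p) (hp' : IsSelfAdjoint p)
    {c : ℝ} (hc : 0 < c) (h : c • 1 ≤ p * d * p) : c • Ring.inverse d ≤ p * p := by
  have hd : IsStrictlyPositive d :=
    (hp.isStrictlyPositive_iff_conjugate_of_isSelfAdjoint d p hp').mp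
      ((isStrictlyPositive_one.smul hc).of_le h)
  lift p to Aˣ using hp
  lift d to Aˣ using hd.isUnit
  lift c to ℝˣ using hc.ne'.isUnit
  rw [Ring.inverse_unit]
  have hone : 1 ≤ ((c⁻¹ • (p * d * p) : Aˣ) : A) := by
    simpa [Units.smul_def, inv_smul_smul₀ hc.ne'] using
      smul_le_smul_of_nonneg_left h (inv_nonneg.mpr hc.le)
  have hinv : c • (((p * d * p)⁻¹ : Aˣ) : A) ≤ 1 := by
    simpa [Units.smul_def] using CStarAlgebra.inv_le_one hone
  calc (c : ℝ) • ((d⁻¹ : Aˣ) : A) = p * (c • ((p * d * p)⁻¹ : Aˣ)) * p := by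
        rw [mul_smul_comm, smul_mul_assoc, ← Units.val_mul, ← Units.val_mul]; group; rfl
    _ ≤ p * 1 * p := hp'.conjugate_le_conjugate hinv
    _ = p * p := by rw [mul_one]

lemma isStrictlyPositive_and_smul_rpow_neg_le {p a : A} (hp : IsUnit p)
    (hp' : IsSelfAdjoint p) (ha : 0 ≤ a) {s c : ℝ} (hs : s ≠ 0) (hc : 0 < c)
    (h : c • 1 ≤ p * a ^ s * p) : IsStrictlyPositive a ∧ c • a ^ (-s) ≤ p * p := by
  have has : IsStrictlyPositive (a ^ s) :=
    (hp.isStrictlyPositive_iff_conjugate_of_isSelfAdjoint _ p hp').mp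
      ((isStrictlyPositive_one.smul hc).of_le h)
  have hapos : IsStrictlyPositive a :=
    ((CFC.isUnit_rpow_iff a s hs).mp has.isUnit).isStrictlyPositive ha
  exact ⟨hapos, CFC.inverse_rpow a s hs ▸ smul_inverse_le_mul_self_of_smul_one_le hp hp' hc h⟩

lemma le_one_sub_mul_rpow_add_mul {l e t : ℝ} (hl : 0 ≤ l) (he : 0 < e) (ht0 : 0 ≤ t)
    (ht1 : t < 1) :
    l ≤ (1 - t) * (l ^ 2 * e ^ (-(2 * t))) ^ (2 * (1 - t))⁻¹ + t * e := by
  have h1 : 0 < 1 - t := sub_pos.mpr ht1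
  have hle : l ^ 2 * e ^ (-(2 * t)) = (l * e ^ (-t)) ^ (2 : ℝ) := by
    rw [Real.mul_rpow hl (by positivity), ← Real.rpow_mul he.le, Real.rpow_two]
    ring_nf
  have hmean : ((l ^ 2 * e ^ (-(2 * t))) ^ (2 * (1 - t))⁻¹) ^ (1 - t) * e ^ t = l := by
    rw [hle, ← Real.rpow_mul (by positivity), ← Real.rpow_mul (by positivity),
      show 2 * ((2 * (1 - t))⁻¹ * (1 - t)) = 1 by field_simp, Real.rpow_one, mul_assoc,
      ← Real.rpow_add he, neg_add_cancel, Real.rpow_zero, mul_one]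
  calc l = ((l ^ 2 * e ^ (-(2 * t))) ^ (2 * (1 - t))⁻¹) ^ (1 - t) * e ^ t := hmean.symm
    _ ≤ _ := Real.geom_mean_le_arith_mean2_weighted h1.le ht0 (by positivity) he.le (by ring)

lemma smul_one_le_smul_rpow_add_smul {a : A} (ha : IsStrictlyPositive a) {l t : ℝ} (hl : 0 < l)
    (ht0 : 0 ≤ t) (ht1 : t < 1) :
    l • 1 ≤ (1 - t) • (l ^ 2 • a ^ (-(2 * t))) ^ (2 * (1 - t))⁻¹ + t • a := by
  have hpos (x : ℝ) (hx : x ∈ spectrum ℝ a) : 0 < x := ha.spectrum_pos hx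
  set f : ℝ → ℝ := fun x => l ^ 2 * x ^ (-(2 * t))
  have hf (x : ℝ) (hx : x ∈ spectrum ℝ a) : 0 < f x :=
    mul_pos (by positivity) (Real.rpow_pos_of_pos (hpos x hx) _)
  have hpow_cont : ContinuousOn (fun x : ℝ => x ^ (-(2 * t))) (spectrum ℝ a) :=
    continuousOn_id.rpow_const fun x hx => Or.inl (hpos x hx).ne'
  have hf_cont : ContinuousOn f (spectrum ℝ a) := continuousOn_const.mul hpow_cont
  have hfw_cont : ContinuousOn (fun x => f x ^ (2 * (1 - t))⁻¹) (spectrum ℝ a) :=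
    hf_cont.rpow_const fun x hx => Or.inl (hf x hx).ne'
  have hcfc : (1 - t) • (l ^ 2 • a ^ (-(2 * t))) ^ (2 * (1 - t))⁻¹ + t • a =
      cfc (fun x => (1 - t) * f x ^ (2 * (1 - t))⁻¹ + t * x) a := by
    rw [cfc_add a _ _ (by fun_prop) (by fun_prop), cfc_const_mul _ _ a hfw_cont,
      cfc_const_mul_id t a, ← CFC.cfc_rpow hf hf_cont, cfc_const_mul _ _ a hpow_cont,
      ← CFC.rpow_eq_cfc_real]
  rw [hcfc, ← Algebra.algebraMap_eq_smul_one]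
  exact algebraMap_le_cfc _ _ _
    (fun x hx => le_one_sub_mul_rpow_add_mul hl.le (hpos x hx) ht0 ht1) (by fun_prop)

end CStarAlgebra

section CourantFischer

lemma exists_ne_zero_mulVec_eq_zero {m κ K : Type*} [Fintype m] [Fintype κ] [Field K]
    (h : Fintype.card m < Fintype.card κ) (W : Matrix m κ K) : ∃ w ≠ 0, W *ᵥ w = 0 := by
  have hker : W.mulVecLin.ker ≠ ⊥ := LinearMap.ker_ne_bot_of_finrank_lt (by simpa using h)
  obtain ⟨w, hw, hw0⟩ := (Submodule.ne_bot_iff _).mp hker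
  exact ⟨w, hw0, hw⟩

variable {m : Type*} [Fintype m] [DecidableEq m]

lemma sort_eigenvalues {H : Matrix m m ℂ} (hH : H.IsHermitian) :
    (Finset.univ.val.map hH.eigenvalues).sort (· ≤ ·) = (List.ofFn hH.eigenvalues₀).reverse := by
  have hmap : Finset.univ.val.map hH.eigenvalues = (List.ofFn hH.eigenvalues₀ : Multiset ℝ) := by
    rw [show hH.eigenvalues = hH.eigenvalues₀ ∘ (Fintype.equivOfCardEq (Fintype.card_fin _)).symm
      from rfl, ← Multiset.map_map, Multiset.map_univ_val_equiv, Fin.univ_val_map]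
  refine List.Perm.eq_of_pairwise (le := (· ≤ ·)) (fun a b _ _ => le_antisymm)
    (Multiset.pairwise_sort _ _) ?_ ?_
  · exact List.pairwise_reverse.mpr hH.eigenvalues₀_antitone.sortedGE_ofFn.pairwise
  · rw [← Multiset.coe_eq_coe, Multiset.sort_eq, hmap, Multiset.coe_reverse]

lemma eigDesc_succ_eq_eigenvalues₀ {H : Matrix m m ℂ} (hH : H.IsHermitian)
    (i : Fin (Fintype.card m)) : eigDesc H (i + 1) = hH.eigenvalues₀ i := by
  have hi : Fintype.card m - (i + 1) < (List.ofFn hH.eigenvalues₀).reverse.length := by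
    rw [List.length_reverse, List.length_ofFn]
    lia
  rw [eigDesc, dif_pos hH, sort_eigenvalues, List.getD_eq_getElem _ _ hi, List.getElem_reverse,
    List.getElem_ofFn]
  congr 1
  ext
  simp only [List.length_ofFn]
  lia

lemma exists_unitary_diagonal_eigenvalues₀ {H : Matrix m m ℂ} (hH : H.IsHermitian) :
    ∃ Q : Matrix m (Fin (Fintype.card m)) ℂ, Qᴴ * Q = 1 ∧ Q * Qᴴ = 1 ∧
      Qᴴ * H * Q = diagonal (fun k => (hH.eigenvalues₀ k : ℂ)) := by
  set U := (hH.eigenvectorUnitary : Matrix m m ℂ)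
  have hU : Uᴴ * U = 1 := Unitary.coe_star_mul_self hH.eigenvectorUnitary
  have hU' : U * Uᴴ = 1 := Unitary.coe_mul_star_self hH.eigenvectorUnitary
  have hdiag : Uᴴ * H * U = diagonal (RCLike.ofReal ∘ hH.eigenvalues) := by
    have h := hH.conjStarAlgAut_star_eigenvectorUnitary
    simp only [Unitary.conjStarAlgAut_apply, Unitary.coe_star, star_star] at h
    exact h
  set e : Fin (Fintype.card m) ≃ m := Fintype.equivOfCardEq (Fintype.card_fin _)
  have hcompress (X : Matrix m m ℂ) :
      (U.submatrix id e)ᴴ * X * U.submatrix id e = (Uᴴ * X * U).submatrix e e := rfl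
  refine ⟨U.submatrix id e, ?_, ?_, ?_⟩
  · have h := hcompress 1
    rwa [Matrix.mul_one, Matrix.mul_one, hU, submatrix_one_equiv] at h
  · rw [conjTranspose_submatrix, submatrix_mul_equiv, hU', submatrix_id_id]
  · rw [hcompress, hdiag, submatrix_diagonal_equiv]
    congr 1
    ext k
    simp only [Function.comp_apply, IsHermitian.eigenvalues, e, Equiv.symm_apply_apply]
    rfl

lemma exists_isometry_of_le_eigDesc {H : Matrix m m ℂ} (hH : H.IsHermitian)
    {i : Fin (Fintype.card m)} {c : ℝ} (hc : c ≤ eigDesc H (i + 1)) :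
    ∃ V : Matrix m (Fin (i + 1)) ℂ, Vᴴ * V = 1 ∧ c • 1 ≤ Vᴴ * H * V := by
  obtain ⟨Q, hQ, -, hdiag⟩ := exists_unitary_diagonal_eigenvalues₀ hH
  rw [eigDesc_succ_eq_eigenvalues₀ hH] at hc
  set ι : Fin (i + 1) → Fin (Fintype.card m) := Fin.castLE i.isLt
  have hι : Function.Injective ι := Fin.castLE_injective _
  have hcompress (X : Matrix m m ℂ) :
      (Q.submatrix id ι)ᴴ * X * Q.submatrix id ι = (Qᴴ * X * Q).submatrix ι ι := rfl
  refine ⟨Q.submatrix id ι, ?_, ?_⟩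
  · have h := hcompress 1
    rwa [Matrix.mul_one, Matrix.mul_one, hQ, submatrix_one ι hι] at h
  · have hle (k : Fin (i + 1)) : c ≤ hH.eigenvalues₀ (ι k) :=
      hc.trans (hH.eigenvalues₀_antitone (Nat.lt_succ_iff.mp k.isLt))
    rw [hcompress, hdiag, submatrix_diagonal _ ι hι, Matrix.le_iff, ← diagonal_one,
      ← diagonal_smul, diagonal_sub]
    refine PosSemidef.diagonal fun k => ?_
    simpa using hle k

lemma star_dotProduct_diagonal_mulVec (d : m → ℝ) (y : m → ℂ) :
    star y ⬝ᵥ (diagonal (fun i => (d i : ℂ)) *ᵥ y) =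
      ((∑ i, d i * Complex.normSq (y i) : ℝ) : ℂ) := by
  rw [dotProduct, Complex.ofReal_sum]
  refine Finset.sum_congr rfl fun i _ => ?_
  rw [mulVec_diagonal, Complex.ofReal_mul, Complex.normSq_eq_conj_mul_self, Pi.star_apply,
    RCLike.star_def]
  ring

lemma sum_sub_mul_normSq_mulVec_nonneg {κ : Type*} [Fintype κ] [DecidableEq κ] {d : m → ℝ}
    {c : ℝ} {W : Matrix m κ ℂ} (hW : Wᴴ * W = 1)
    (hc : c • 1 ≤ Wᴴ * diagonal (fun k => (d k : ℂ)) * W) (w : κ → ℂ) :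
    0 ≤ ∑ k, (d k - c) * Complex.normSq ((W *ᵥ w) k) := by
  have hdiag : diagonal (fun k => ((d k - c : ℝ) : ℂ)) = diagonal (fun k => (d k : ℂ)) - c • 1 := by
    rw [← diagonal_one, ← diagonal_smul, diagonal_sub]
    simp
  have hsub : Wᴴ * diagonal (fun k => (d k : ℂ)) * W - c • 1 =
      Wᴴ * diagonal (fun k => ((d k - c : ℝ) : ℂ)) * W := by
    rw [hdiag, Matrix.mul_sub, Matrix.sub_mul, Matrix.mul_smul, Matrix.smul_mul, Matrix.mul_one,
      hW]
  have hnonneg := (Matrix.le_iff.mp hc).re_dotProduct_nonneg w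
  rwa [hsub, ← mulVec_mulVec, ← mulVec_mulVec, dotProduct_mulVec, ← star_mulVec,
    star_dotProduct_diagonal_mulVec] at hnonneg

lemma le_of_smul_one_le_conjTranspose_mul_diagonal_mul {n : ℕ} {κ : Type*} [Fintype κ]
    [DecidableEq κ] {d : Fin n → ℝ} (hd : Antitone d) {i : Fin n} (hi : i < Fintype.card κ)
    {c : ℝ} {W : Matrix (Fin n) κ ℂ} (hW : Wᴴ * W = 1)
    (hc : c • 1 ≤ Wᴴ * diagonal (fun k => (d k : ℂ)) * W) : c ≤ d i := by
  obtain ⟨w, hw0, hw⟩ := exists_ne_zero_mulVec_eq_zero (by simpa using hi)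
    (W.submatrix (Fin.castLE i.isLt.le : Fin i → Fin n) id)
  have hWw : W *ᵥ w ≠ 0 := fun hWw => hw0 <| by
    rw [← one_mulVec w, ← hW, ← mulVec_mulVec, hWw, mulVec_zero]
  have hlow (k : Fin n) (hk : k < i) : (W *ᵥ w) k = 0 := congrFun hw ⟨k, hk⟩
  have hsum := sum_sub_mul_normSq_mulVec_nonneg hW hc w
  contrapose! hsum
  have hterm (k : Fin n) (hk : (W *ᵥ w) k ≠ 0) :
      (d k - c) * Complex.normSq ((W *ᵥ w) k) < 0 :=
    mul_neg_of_neg_of_pos (sub_neg.mpr ((hd (not_lt.mp (mt (hlow k) hk))).trans_lt hsum))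
      (Complex.normSq_pos.mpr hk)
  obtain ⟨k, hk⟩ := Function.ne_iff.mp hWw
  refine Finset.sum_neg' (fun k _ => ?_) ⟨k, Finset.mem_univ k, hterm k hk⟩
  rcases eq_or_ne ((W *ᵥ w) k) 0 with hk | hk
  · rw [hk, map_zero, mul_zero]
  · exact (hterm k hk).le

lemma le_eigDesc_of_isometry {κ : Type*} [Fintype κ] [DecidableEq κ] {H : Matrix m m ℂ}
    (hH : H.IsHermitian) {i : Fin (Fintype.card m)} (hi : i < Fintype.card κ) {c : ℝ}
    {V : Matrix m κ ℂ} (hV : Vᴴ * V = 1) (hc : c • 1 ≤ Vᴴ * H * V) :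
    c ≤ eigDesc H (i + 1) := by
  obtain ⟨Q, -, hQ, hdiag⟩ := exists_unitary_diagonal_eigenvalues₀ hH
  rw [eigDesc_succ_eq_eigenvalues₀ hH]
  have hQV : Q * (Qᴴ * V) = V := by rw [← Matrix.mul_assoc, hQ, Matrix.one_mul]
  have hVQ : (Qᴴ * V)ᴴ * Qᴴ = Vᴴ := by rw [← conjTranspose_mul, hQV]
  refine le_of_smul_one_le_conjTranspose_mul_diagonal_mul (W := Qᴴ * V)
    hH.eigenvalues₀_antitone hi ?_ ?_
  · rw [← Matrix.mul_assoc, hVQ, hV]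
  · have hVHV : (Qᴴ * V)ᴴ * (Qᴴ * H * Q) * (Qᴴ * V) = Vᴴ * H * V := by
      rw [Matrix.mul_assoc, Matrix.mul_assoc (Qᴴ * H), hQV, Matrix.mul_assoc Qᴴ,
        ← Matrix.mul_assoc, hVQ, ← Matrix.mul_assoc]
    rwa [← hdiag, hVHV]

lemma eigDesc_eq_of_charpoly_eq {H K : Matrix m m ℂ} (hH : H.IsHermitian) (hK : K.IsHermitian)
    (h : H.charpoly = K.charpoly) (j : ℕ) : eigDesc H j = eigDesc K j := by
  rw [eigDesc, eigDesc, dif_pos hH, dif_pos hK, (hH.eigenvalues_eq_eigenvalues_iff hK).mpr h]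

lemma singDesc_mul_comm {X Y : Matrix m m ℂ} (hX : X.IsHermitian) (hY : Y.IsHermitian) (j : ℕ) :
    singDesc (X * Y) j = singDesc (Y * X) j := by
  have hcharpoly : ((X * Y)ᴴ * (X * Y)).charpoly = ((Y * X)ᴴ * (Y * X)).charpoly := by
    rw [charpoly_mul_comm, conjTranspose_mul, conjTranspose_mul, hX.eq, hY.eq]
  rw [singDesc, singDesc, eigDesc_eq_of_charpoly_eq (isHermitian_conjTranspose_mul_self _)
    (isHermitian_conjTranspose_mul_self _) hcharpoly]

lemma eigDesc_nonneg {H : Matrix m m ℂ} (hH : H.PosSemidef) (i : Fin (Fintype.card m)) :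
    0 ≤ eigDesc H (i + 1) := by
  refine le_eigDesc_of_isometry (κ := m) hH.isHermitian i.isLt
    (V := (1 : Matrix m m ℂ)) (by rw [Matrix.mul_one, conjTranspose_one]) ?_
  rw [zero_smul, conjTranspose_one, Matrix.one_mul, Matrix.mul_one]
  exact hH.nonneg

end CourantFischer

section Compression

variable {m κ : Type*} [Fintype m] [DecidableEq m] [Fintype κ] [DecidableEq κ]

lemma conjTranspose_mul_rpow_conj_mul {V : Matrix m κ ℂ} (hV : Vᴴ * V = 1) {X : Matrix κ κ ℂ}
    (hX : 0 ≤ X) (s : ℝ) : Vᴴ * (V * X * Vᴴ) ^ s * V = X ^ s := by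
  have hVXV : 0 ≤ V * X * Vᴴ := (hX.posSemidef.mul_mul_conjTranspose_same V).nonneg
  have hcomm : V * X * Vᴴ * V = V * X := by rw [Matrix.mul_assoc, hV, Matrix.mul_one]
  rw [Matrix.mul_assoc, rpow_mul_of_mul_eq_mul hVXV hX hcomm, ← Matrix.mul_assoc, hV,
    Matrix.one_mul]

lemma rpow_le_conjTranspose_mul_mul {A : Matrix m m ℂ} (hA : 0 ≤ A) {V : Matrix m κ ℂ}
    (hV : Vᴴ * V = 1) {X : Matrix κ κ ℂ} (hX : 0 ≤ X) {p : ℝ} (hp : 1 ≤ p)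
    (h : V * X * Vᴴ ≤ A ^ p) : X ^ p⁻¹ ≤ Vᴴ * A * V := by
  have hp0 : 0 < p := zero_lt_one.trans_le hp
  have hroot : (V * X * Vᴴ) ^ p⁻¹ ≤ A := by
    calc (V * X * Vᴴ) ^ p⁻¹ ≤ (A ^ p) ^ p⁻¹ :=
          CFC.rpow_le_rpow ⟨by positivity, inv_le_one_of_one_le₀ hp⟩ h
      _ = A := by
          rw [CFC.rpow_rpow_of_exponent_nonneg A _ _ hp0.le (by positivity),
            mul_inv_cancel₀ hp0.ne', CFC.rpow_one A]
  rw [← conjTranspose_mul_rpow_conj_mul hV hX]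
  exact conjTranspose_mul_mul_mono hroot V

lemma exists_isometry_conj_rpow_neg_le {M B : Matrix m m ℂ} (hM : M.IsHermitian) (hB : 0 ≤ B)
    {s : ℝ} (hs0 : 0 < s) (hs1 : s ≤ 1) {Y : Matrix m κ ℂ} (hY : Yᴴ * Y = 1) {l : ℝ} (hl : 0 < l)
    (h : l ^ 2 • 1 ≤ Yᴴ * (M * B ^ s * M) * Y) :
    ∃ V : Matrix m κ ℂ, Vᴴ * V = 1 ∧ IsStrictlyPositive (Vᴴ * B * V) ∧
      V * (l ^ 2 • (Vᴴ * B * V) ^ (-s)) * Vᴴ ≤ M * M := by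
  have hZ : Yᴴ * (M * B ^ s * M) * Y = (M * Y)ᴴ * B ^ s * (M * Y) := by
    simp only [conjTranspose_mul, hM.eq, Matrix.mul_assoc]
  rw [hZ] at h
  have hl2 : IsStrictlyPositive (l ^ 2 • (1 : Matrix κ κ ℂ)) :=
    isStrictlyPositive_one.smul (by positivity)
  obtain ⟨V, P, hV, hP, hVP⟩ := exists_isometry_mul_eq
    (posDef_conjTranspose_mul_self_of_isUnit_mul (hl2.of_le h).isUnit)
  have hC : 0 ≤ Vᴴ * B * V := (hB.posSemidef.conjTranspose_mul_mul_same V).nonneg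
  have hPCP : l ^ 2 • 1 ≤ P * (Vᴴ * B * V) ^ s * P := by
    calc l ^ 2 • 1 ≤ (M * Y)ᴴ * B ^ s * (M * Y) := h
      _ = Pᴴ * (Vᴴ * B ^ s * V) * P := by
          rw [← hVP]; simp only [conjTranspose_mul, Matrix.mul_assoc]
      _ ≤ Pᴴ * (Vᴴ * B * V) ^ s * P :=
          conjTranspose_mul_mul_mono (conjTranspose_mul_rpow_mul_le hB hV ⟨hs0.le, hs1⟩) P
      _ = P * (Vᴴ * B * V) ^ s * P := by rw [hP.isHermitian.eq]
  obtain ⟨hCpos, hCP⟩ := isStrictlyPositive_and_smul_rpow_neg_le hP.isUnit hP.isHermitian hC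
    hs0.ne' (by positivity) hPCP
  refine ⟨V, hV, hCpos, ?_⟩
  calc V * (l ^ 2 • (Vᴴ * B * V) ^ (-s)) * Vᴴ ≤ V * (P * P) * Vᴴ :=
        mul_mul_conjTranspose_mono hCP V
    _ = V * P * (V * P)ᴴ := by
        simp only [conjTranspose_mul, hP.isHermitian.eq, Matrix.mul_assoc]
    _ = M * (Y * Yᴴ) * Mᴴ := by rw [hVP]; simp only [conjTranspose_mul, Matrix.mul_assoc]
    _ ≤ M * 1 * Mᴴ :=
        mul_mul_conjTranspose_mono (isStarProjection_mul_conjTranspose_self hY).le_one M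
    _ = M * M := by rw [Matrix.mul_one, hM.eq]

end Compression

section Ando

variable {m : Type*} [Fintype m] [DecidableEq m] {A B : Matrix m m ℂ}

lemma smul_one_le_conjTranspose_mul_combination_mul {κ : Type*} [Fintype κ] [DecidableEq κ]
    (hA : 0 ≤ A) {V : Matrix m κ ℂ} (hV : Vᴴ * V = 1) (hC : IsStrictlyPositive (Vᴴ * B * V))
    {l t : ℝ} (hl : 0 < l) (ht0 : 0 ≤ t) (ht : t ≤ 1 / 2)
    (h : V * (l ^ 2 • (Vᴴ * B * V) ^ (-(2 * t))) * Vᴴ ≤ A ^ (2 * (1 - t))) :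
    l • 1 ≤ Vᴴ * ((1 - t) • A + t • B) * V := by
  have hX : 0 ≤ l ^ 2 • (Vᴴ * B * V) ^ (-(2 * t)) :=
    smul_nonneg (sq_nonneg l) CFC.rpow_nonneg
  calc l • 1 ≤ (1 - t) • (l ^ 2 • (Vᴴ * B * V) ^ (-(2 * t))) ^ (2 * (1 - t))⁻¹
        + t • (Vᴴ * B * V) := smul_one_le_smul_rpow_add_smul hC hl ht0 (by linarith)
    _ ≤ (1 - t) • (Vᴴ * A * V) + t • (Vᴴ * B * V) := by
        gcongr
        · linarith
        · exact rpow_le_conjTranspose_mul_mul hA hV hX (by linarith) h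
    _ = Vᴴ * ((1 - t) • A + t • B) * V := by
        simp only [Matrix.mul_add, Matrix.add_mul, Matrix.mul_smul, Matrix.smul_mul]

lemma singDesc_rpow_mul_rpow_le_of_pos (hA : 0 ≤ A) (hB : 0 ≤ B) {t : ℝ} (ht0 : 0 < t)
    (ht : t ≤ 1 / 2) (i : Fin (Fintype.card m)) :
    singDesc (A ^ (1 - t) * B ^ t) (i + 1) ≤ eigDesc ((1 - t) • A + t • B) (i + 1) := by
  have hAB : 0 ≤ (1 - t) • A + t • B :=
    add_nonneg (smul_nonneg (by linarith) hA) (smul_nonneg ht0.le hB)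
  rw [singDesc_mul_comm (rpow_isHermitian A _) (rpow_isHermitian B _)]
  set l := singDesc (B ^ t * A ^ (1 - t)) (i + 1)
  rcases le_or_gt l 0 with hl | hl
  · exact hl.trans (eigDesc_nonneg hAB.posSemidef i)
  have hl2 : l ^ 2 ≤ eigDesc ((B ^ t * A ^ (1 - t))ᴴ * (B ^ t * A ^ (1 - t))) (i + 1) :=
    (Real.sq_sqrt (eigDesc_nonneg (posSemidef_conjTranspose_mul_self _) i)).le
  have hgram : (B ^ t * A ^ (1 - t))ᴴ * (B ^ t * A ^ (1 - t)) =
      A ^ (1 - t) * B ^ (2 * t) * A ^ (1 - t) := by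
    rw [conjTranspose_mul, (rpow_isHermitian A _).eq, (rpow_isHermitian B _).eq, mul_comm 2 t,
      ← rpow_mul_rpow_self hB ht0.le]
    simp only [Matrix.mul_assoc]
  obtain ⟨Y, hY, hlY⟩ :=
    exists_isometry_of_le_eigDesc (isHermitian_conjTranspose_mul_self _) hl2
  rw [hgram] at hlY
  obtain ⟨V, hV, hC, hVC⟩ := exists_isometry_conj_rpow_neg_le (rpow_isHermitian A _) hB
    (by linarith) (by linarith) hY hl hlY
  rw [rpow_mul_rpow_self hA (by linarith), mul_comm (1 - t) 2] at hVC
  exact le_eigDesc_of_isometry hAB.posSemidef.isHermitian (by simp) hV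
    (smul_one_le_conjTranspose_mul_combination_mul hA hV hC hl ht0.le ht hVC)

lemma singDesc_le_eigDesc (hA : 0 ≤ A) (i : Fin (Fintype.card m)) :
    singDesc A (i + 1) ≤ eigDesc A (i + 1) := by
  have hroot : A ^ (1 - 1 / 2 : ℝ) * A ^ (1 / 2 : ℝ) = A := by
    rw [sub_half, rpow_mul_rpow_self hA one_half_pos.le, div_mul_cancel₀ _ two_ne_zero,
      CFC.rpow_one A]
  have hcomb : (1 - 1 / 2 : ℝ) • A + (1 / 2 : ℝ) • A = A := by module
  have h := singDesc_rpow_mul_rpow_le_of_pos hA hA one_half_pos le_rfl i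
  rwa [hroot, hcomb] at h

lemma singDesc_rpow_mul_rpow_le (hA : 0 ≤ A) (hB : 0 ≤ B) {t : ℝ} (ht0 : 0 ≤ t)
    (ht : t ≤ 1 / 2) (i : Fin (Fintype.card m)) :
    singDesc (A ^ (1 - t) * B ^ t) (i + 1) ≤ eigDesc ((1 - t) • A + t • B) (i + 1) := by
  rcases ht0.eq_or_lt with rfl | ht0
  · simpa only [sub_zero, CFC.rpow_one A, CFC.rpow_zero B, mul_one, one_smul, zero_smul, add_zero]
      using singDesc_le_eigDesc hA i
  · exact singDesc_rpow_mul_rpow_le_of_pos hA hB ht0 ht i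

end Ando

theorem stmt11_general {m : Type*} [Fintype m] [DecidableEq m] {A B : Matrix m m ℂ}
    (hA : A.PosSemidef) (hB : B.PosSemidef) {t : ℝ} (ht0 : 0 ≤ t) (ht1 : t ≤ 1) {j : ℕ}
    (hj : 1 ≤ j) (hjm : j ≤ Fintype.card m) :
    singDesc (matPow A (1 - t) * matPow B t) j ≤ eigDesc ((1 - t) • A + t • B) j := by
  obtain ⟨i, rfl⟩ : ∃ i : Fin (Fintype.card m), j = i + 1 := ⟨⟨j - 1, by lia⟩, by simp [hj]⟩
  rw [matPow_eq_rpow hA, matPow_eq_rpow hB]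
  rcases le_total t (1 / 2) with ht | ht
  · exact singDesc_rpow_mul_rpow_le hA.nonneg hB.nonneg ht0 ht i
  · have hswap := singDesc_rpow_mul_rpow_le hB.nonneg hA.nonneg (sub_nonneg.mpr ht1)
      (by linarith) i
    rwa [sub_sub_cancel, singDesc_mul_comm (rpow_isHermitian B _) (rpow_isHermitian A _),
      add_comm (t • B)] at hswap

/-- Ando's inequality: for positive semidefinite `A, B` and `t ∈ [0,1]`,
`λ_j((1-t)A + tB) ≥ σ_j(A^{1-t} B^t)` for all `j`. -/
theorem stmt11 {n : ℕ} (A B : Matrix (Fin n) (Fin n) ℂ)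
    (hA : A.PosSemidef) (hB : B.PosSemidef) (t : ℝ) (ht0 : 0 ≤ t) (ht1 : t ≤ 1) :
    ∀ j : ℕ, 1 ≤ j → j ≤ n →
      singDesc (matPow A (1 - t) * matPow B t) j ≤ eigDesc ((1 - t) • A + t • B) j := by
  intro j hj hjn
  exact stmt11_general hA hB ht0 ht1 hj (by rwa [Fintype.card_fin])
end

section
/- Let A₁₁ and X be r×r complex positive definite matrices and let A₁₂ be an r×(n−r) complex matrix such that X(A₁₁² + A₁₂A₁₂*)X = I_r. Then the n×n Hermitian block matrix [[A₁₁ + X, A₁₂], [A₁₂*, A₁₂*A₁₁⁻¹A₁₂]] has, counting multiplicity, the same nonzero eigenvalues as the 2r×2r Hermitian block matrix [[A₁₁^{−1/2} X⁻² A₁₁^{−1/2}, A₁₁^{1/2} X^{1/2}], [X^{1/2} A₁₁^{1/2}, X]]. -/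
/-!
Write `A₁₁ = a * a` and `X = x * x` with `a`, `x` the positive square roots, and `A₂₁ = A₁₂ᴴ`. The
`n × n` matrix is `F * G` with `F = [[a, x], [A₂₁ * a⁻¹, 0]]` and `G = [[a, a⁻¹ * A₁₂], [x, 0]]`,
while `G * F` is the `2r × 2r` matrix, since the hypothesis says that `A₁₁² + A₁₂ * A₂₁ = X⁻²`. The
characteristic polynomials of `F * G` and `G * F` agree up to powers of the variable.
-/

open Matrix
open scoped Classical ComplexOrder

section NonzeroRoots

open Polynomial

variable {R k l : Type*} [CommRing R] [IsDomain R] [DecidableEq R]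
  [Fintype k] [DecidableEq k] [Fintype l] [DecidableEq l]

theorem filter_ne_zero_roots_X_pow_mul (n : ℕ) (p : R[X]) :
    (X ^ n * p).roots.filter (fun x => x ≠ 0) = p.roots.filter (fun x => x ≠ 0) := by
  rcases eq_or_ne p 0 with rfl | hp
  · rw [mul_zero]
  · have hX : (n • ({0} : Multiset R)).filter (fun x => x ≠ 0) = 0 :=
      Multiset.filter_eq_nil.mpr fun x hx =>
        not_not.mpr (Multiset.mem_singleton.mp (Multiset.mem_of_mem_nsmul hx))
    rw [roots_mul (mul_ne_zero (pow_ne_zero n X_ne_zero) hp), roots_X_pow, Multiset.filter_add,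
      hX, zero_add]

theorem filter_ne_zero_roots_charpoly_mul_comm (M : Matrix k l R) (N : Matrix l k R) :
    (M * N).charpoly.roots.filter (fun x => x ≠ 0) =
      (N * M).charpoly.roots.filter (fun x => x ≠ 0) := by
  rw [← filter_ne_zero_roots_X_pow_mul (Fintype.card l), charpoly_mul_comm',
    filter_ne_zero_roots_X_pow_mul]

end NonzeroRoots

section BlockFactorization

variable {R k l p : Type*} [CommRing R] [Fintype k] [DecidableEq k] {a b : Matrix k k R}

theorem fromBlocks_add_eq_mul [Fintype p] (ha : IsUnit a) (hb : IsUnit b)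
    (x : Matrix k p R) (y : Matrix p k R) (B : Matrix k l R) (C : Matrix l k R) :
    fromBlocks (a * b + x * y) B C (C * (a * b)⁻¹ * B) =
      fromBlocks a x (C * b⁻¹) 0 * fromBlocks b (a⁻¹ * B) y 0 := by
  rw [isUnit_iff_isUnit_det] at ha hb
  simp only [fromBlocks_multiply, Matrix.mul_zero, Matrix.zero_mul, add_zero, Matrix.mul_inv_rev,
    Matrix.mul_assoc, mul_nonsing_inv_cancel_left a B ha, nonsing_inv_mul b hb, Matrix.mul_one]

theorem fromBlocks_inv_mul_mul_inv_eq_mul [Fintype l] (ha : IsUnit a) (hb : IsUnit b)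
    (x : Matrix k p R) (y : Matrix p k R) (B : Matrix k l R) (C : Matrix l k R) :
    fromBlocks (a⁻¹ * ((a * b) ^ 2 + B * C) * b⁻¹) (b * x) (y * a) (y * x) =
      fromBlocks b (a⁻¹ * B) y 0 * fromBlocks a x (C * b⁻¹) 0 := by
  rw [isUnit_iff_isUnit_det] at ha hb
  have hab : a⁻¹ * (a * b) ^ 2 * b⁻¹ = b * a := by
    rw [pow_two, ← Matrix.mul_assoc (a * b), ← Matrix.mul_assoc,
      mul_nonsing_inv_cancel_right b _ hb, Matrix.mul_assoc a, nonsing_inv_mul_cancel_left a _ ha]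
  simp only [fromBlocks_multiply, Matrix.mul_zero, Matrix.zero_mul, add_zero, Matrix.mul_add,
    Matrix.add_mul, hab, Matrix.mul_assoc]

theorem filter_ne_zero_roots_charpoly_fromBlocks [IsDomain R] [DecidableEq R] [Fintype l]
    [DecidableEq l] [Fintype p] [DecidableEq p] (ha : IsUnit a) (hb : IsUnit b) (x : Matrix k p R)
    (y : Matrix p k R) (B : Matrix k l R) (C : Matrix l k R) :
    (fromBlocks (a * b + x * y) B C (C * (a * b)⁻¹ * B)).charpoly.roots.filter (fun z => z ≠ 0) =
      (fromBlocks (a⁻¹ * ((a * b) ^ 2 + B * C) * b⁻¹) (b * x) (y * a)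
        (y * x)).charpoly.roots.filter (fun z => z ≠ 0) := by
  rw [fromBlocks_add_eq_mul ha hb, fromBlocks_inv_mul_mul_inv_eq_mul ha hb,
    filter_ne_zero_roots_charpoly_mul_comm]

end BlockFactorization

section MatPow

variable {k : Type*} [Fintype k] [DecidableEq k] {A : Matrix k k ℂ}

theorem matPow_eq_conjStarAlgAut (hA : A.PosSemidef) (s : ℝ) :
    matPow A s = Unitary.conjStarAlgAut ℂ _ hA.1.eigenvectorUnitary
      (diagonal fun i => ((hA.1.eigenvalues i ^ s : ℝ) : ℂ)) :=
  dif_pos hA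

theorem matPow_zero (hA : A.PosSemidef) : matPow A 0 = 1 := by
  simp only [matPow_eq_conjStarAlgAut hA, Real.rpow_zero, Complex.ofReal_one, diagonal_one, map_one]

theorem matPow_one (hA : A.PosSemidef) : matPow A 1 = A := by
  simp only [matPow_eq_conjStarAlgAut hA, Real.rpow_one]
  exact hA.1.spectral_theorem.symm

theorem matPow_add (hA : A.PosDef) (s t : ℝ) : matPow A (s + t) = matPow A s * matPow A t := by
  simp only [matPow_eq_conjStarAlgAut hA.posSemidef, ← map_mul, diagonal_mul_diagonal,
    ← Complex.ofReal_mul, Real.rpow_add (hA.eigenvalues_pos _)]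

theorem matPow_add_of_nonneg (hA : A.PosSemidef) {s t : ℝ} (hs : 0 ≤ s) (ht : 0 ≤ t) :
    matPow A (s + t) = matPow A s * matPow A t := by
  simp only [matPow_eq_conjStarAlgAut hA, ← map_mul, diagonal_mul_diagonal, ← Complex.ofReal_mul,
    Real.rpow_add_of_nonneg (hA.eigenvalues_nonneg _) hs ht]

theorem matPow_half_mul_self (hA : A.PosSemidef) : matPow A (1 / 2) * matPow A (1 / 2) = A := by
  rw [← matPow_add_of_nonneg hA one_half_pos.le one_half_pos.le, add_halves, matPow_one hA]

theorem matPow_mul_matPow_neg (hA : A.PosDef) (s : ℝ) : matPow A s * matPow A (-s) = 1 := by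
  rw [← matPow_add hA, add_neg_cancel, matPow_zero hA.posSemidef]

theorem isUnit_matPow (hA : A.PosDef) (s : ℝ) : IsUnit (matPow A s) :=
  .of_mul_eq_one _ (matPow_mul_matPow_neg hA s)

theorem matPow_neg (hA : A.PosDef) (s : ℝ) : matPow A (-s) = (matPow A s)⁻¹ :=
  (inv_eq_right_inv (matPow_mul_matPow_neg hA s)).symm

end MatPow

theorem inv_sq_eq_of_mul_mul_eq_one {R k : Type*} [CommRing R] [Fintype k] [DecidableEq k]
    {X S : Matrix k k R} (h : X * S * X = 1) : (X ^ 2)⁻¹ = S := by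
  have hXS : X * (X * S) = 1 := mul_eq_one_comm.mp h
  exact inv_eq_right_inv (by rw [pow_two, Matrix.mul_assoc, hXS])

theorem stmt18_general {k l : Type*} [Fintype k] [DecidableEq k] [Fintype l] [DecidableEq l]
    {A₁₁ X : Matrix k k ℂ} (A₁₂ : Matrix k l ℂ) (A₂₁ : Matrix l k ℂ) (hA₁₁ : A₁₁.PosDef)
    (hX : X.PosSemidef) (h : X * (A₁₁ ^ 2 + A₁₂ * A₂₁) * X = 1) :
    (fromBlocks (A₁₁ + X) A₁₂ A₂₁ (A₂₁ * A₁₁⁻¹ * A₁₂)).charpoly.roots.filter (fun z => z ≠ 0) =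
      (fromBlocks (matPow A₁₁ (-(1 / 2)) * (X ^ 2)⁻¹ * matPow A₁₁ (-(1 / 2)))
        (matPow A₁₁ (1 / 2) * matPow X (1 / 2))
        (matPow X (1 / 2) * matPow A₁₁ (1 / 2)) X).charpoly.roots.filter (fun z => z ≠ 0) := by
  have ha : IsUnit (matPow A₁₁ (1 / 2)) := isUnit_matPow hA₁₁ (1 / 2)
  rw [inv_sq_eq_of_mul_mul_eq_one h, matPow_neg hA₁₁]
  simpa only [matPow_half_mul_self hA₁₁.posSemidef, matPow_half_mul_self hX] using
    filter_ne_zero_roots_charpoly_fromBlocks ha ha (matPow X (1 / 2)) (matPow X (1 / 2)) A₁₂ A₂₁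

/-- Under the hypotheses of Proposition 1, the `n × n` matrix
`[[A₁₁ + X, A₁₂], [A₁₂ᴴ, A₁₂ᴴ A₁₁⁻¹ A₁₂]]` has the same nonzero eigenvalues, counting
multiplicity, as the `2r × 2r` matrix
`[[A₁₁^{-1/2} X⁻² A₁₁^{-1/2}, A₁₁^{1/2} X^{1/2}], [X^{1/2} A₁₁^{1/2}, X]]`. -/
theorem stmt18 {r m : ℕ} (A11 X : Matrix (Fin r) (Fin r) ℂ) (A12 : Matrix (Fin r) (Fin m) ℂ)
    (hA11 : A11.PosDef) (hX : X.PosDef)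
    (hyp : X * (A11 ^ 2 + A12 * A12ᴴ) * X = 1) :
    Multiset.filter (fun x => x ≠ 0)
        (Matrix.fromBlocks (A11 + X) A12 A12ᴴ (A12ᴴ * A11⁻¹ * A12)).charpoly.roots =
      Multiset.filter (fun x => x ≠ 0)
        (Matrix.fromBlocks (matPow A11 (-(1/2)) * (X ^ 2)⁻¹ * matPow A11 (-(1/2)))
          (matPow A11 (1/2) * matPow X (1/2))
          (matPow X (1/2) * matPow A11 (1/2)) X).charpoly.roots :=
  stmt18_general A12 A12ᴴ hA11 hX.posSemidef hyp
end
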